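/- Let λ ∈ ℂ. Then there exist constants C, c > 0, a potential W : ℝ² → ℂ², and a nonzero twice continuously differentiable function u : ℝ² → ℂ such that Δu + λu = W·∇u on ℝ² (where W·∇u = W₁ ∂₁u + W₂ ∂₂u), |W(x)| ≤ C·⟨x⟩^{-1/2} for all x ∈ ℝ², and |u(x)| ≤ C·exp(−c|x|) for all x ∈ ℝ². -/

import Mathlib

noncomputable section

/-- Partial derivative of `u` in the `i`-th coordinate direction. -/
def pd (u : EuclideanSpace ℝ (Fin 2) → ℂ) (i : Fin 2) (x : EuclideanSpace ℝ (Fin 2)) : ℂ :=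
  fderiv ℝ u x (EuclideanSpace.single i 1)

/-- Laplacian on ℝ²: sum of second partial derivatives. -/
def lap (u : EuclideanSpace ℝ (Fin 2) → ℂ) (x : EuclideanSpace ℝ (Fin 2)) : ℂ :=
  ∑ i, pd (fun y => pd u i y) i x

/-!
Write `ρ = ⟨x⟩`. If `a ^ 2 + λ = B ^ 2`, a wave `e ^ {-aρ} e ^ {± inθ}` of angular frequency
`n = Bρ + O(√ρ)` satisfies `Δu + λu = 0` up to an error `O(ρ ^ {-1/2})` relative to its modulus. The
frequency has to grow like `ρ`, so `u` is made of waves of the fixed frequencies `n = Bj²`, each cut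
off to an annulus `|√ρ - j| < 3/4`. Being slowly varying there, the cutoffs cost only a further
`O(ρ ^ {-1/2})`.

The sense of rotation alternates from one annulus to the next. Where two consecutive waves `V` and
`V'` overlap, `∂_r u ≈ -a(V + V')` and `r⁻¹ ∂_θ u ≈ ± iB(V - V')`, so that `∇u` dominates both waves
although their sum has zeros. The error `f = Δu + λu` is therefore `O(ρ ^ {-1/2} |∇u|)`; on
the bounded region inside all overlaps, `u` is a single wave with `n ≠ 0`, dominated by its angular
derivative. The required potential is `W = f ∇ū / |∇u|²`.
-/

open scoped Topology

/-- The Euclidean plane, on which all the functions below are defined. -/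
abbrev Plane := EuclideanSpace ℝ (Fin 2)

lemma exists_sum_mul_eq_of_norm_le {𝕜 ι : Type*} [RCLike 𝕜] [Fintype ι] (v : EuclideanSpace 𝕜 ι)
    {z : 𝕜} {δ : ℝ} (hδ : 0 ≤ δ) (hz : ‖z‖ ≤ δ * ‖v‖) :
    ∃ w : EuclideanSpace 𝕜 ι, ∑ i, w i * v i = z ∧ ‖w‖ ≤ δ := by
  rcases eq_or_ne v 0 with rfl | hv
  · have hz₀ : z = 0 := by simpa using hz
    exact ⟨0, by simp [hz₀], by simpa using hδ⟩
  have hv' : 0 < ‖v‖ := norm_pos_iff.2 hv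
  let vbar : EuclideanSpace 𝕜 ι := WithLp.toLp 2 fun i => star (v i)
  have norm_vbar : ‖vbar‖ = ‖v‖ := by simp only [EuclideanSpace.norm_eq, vbar, norm_star]
  have sum_vbar : ∑ i, vbar i * v i = (‖v‖ : 𝕜) ^ 2 := by
    rw [← RCLike.ofReal_pow, EuclideanSpace.norm_sq_eq, RCLike.ofReal_sum]
    exact Finset.sum_congr rfl fun i _ => by simp [vbar, RCLike.conj_mul]
  refine ⟨(z / (‖v‖ : 𝕜) ^ 2) • vbar, ?_, ?_⟩
  · have : (‖v‖ : 𝕜) ≠ 0 := RCLike.ofReal_ne_zero.2 hv'.ne'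
    simp only [PiLp.smul_apply, smul_eq_mul, mul_assoc, ← Finset.mul_sum, sum_vbar]
    field_simp
  · rw [norm_smul, norm_vbar, norm_div, norm_pow, RCLike.norm_ofReal, abs_norm]
    calc ‖z‖ / ‖v‖ ^ 2 * ‖v‖ = ‖z‖ / ‖v‖ := by field_simp
      _ ≤ δ := (div_le_iff₀ hv').2 hz

section PartialDerivatives

variable {u v : Plane → ℂ} {x : Plane}

lemma pd_congr (h : u =ᶠ[𝓝 x] v) (i : Fin 2) : pd u i x = pd v i x := by
  rw [pd, pd, h.fderiv_eq]

lemma lap_congr (h : u =ᶠ[𝓝 x] v) : lap u x = lap v x :=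
  Finset.sum_congr rfl fun i _ => pd_congr (h.eventuallyEq_nhds.mono fun _ hy => pd_congr hy i) i

lemma pd_add (hu : DifferentiableAt ℝ u x) (hv : DifferentiableAt ℝ v x) (i : Fin 2) :
    pd (fun y => u y + v y) i x = pd u i x + pd v i x := by
  simp only [pd, fderiv_fun_add hu hv, add_apply]

lemma pd_mul (hu : DifferentiableAt ℝ u x) (hv : DifferentiableAt ℝ v x) (i : Fin 2) :
    pd (fun y => u y * v y) i x = pd u i x * v x + u x * pd v i x := by
  simp only [pd, fderiv_fun_mul hu hv, add_apply, smul_apply, smul_eq_mul]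
  ring

lemma pd_const_mul (c : ℂ) (hu : DifferentiableAt ℝ u x) (i : Fin 2) :
    pd (fun y => c * u y) i x = c * pd u i x := by
  simp only [pd, fderiv_const_mul hu, smul_apply, smul_eq_mul]

lemma differentiable_pd (hu : ContDiff ℝ 2 u) (i : Fin 2) : Differentiable ℝ (pd u i) :=
  ((hu.fderiv_right (m := 1) (by norm_num)).clm_apply contDiff_const).differentiable one_ne_zero

lemma lap_add (hu : ContDiff ℝ 2 u) (hv : ContDiff ℝ 2 v) (x : Plane) :
    lap (fun y => u y + v y) x = lap u x + lap v x := by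
  have hu₁ := hu.differentiable two_ne_zero
  have hv₁ := hv.differentiable two_ne_zero
  simp only [lap, pd_add (hu₁ _) (hv₁ _), pd_add (differentiable_pd hu _ x)
    (differentiable_pd hv _ x), Finset.sum_add_distrib]

lemma lap_mul (hu : ContDiff ℝ 2 u) (hv : ContDiff ℝ 2 v) (x : Plane) :
    lap (fun y => u y * v y) x =
      lap u x * v x + 2 * ∑ i, pd u i x * pd v i x + u x * lap v x := by
  have hu₁ := hu.differentiable two_ne_zero
  have hv₁ := hv.differentiable two_ne_zero
  have hu₂ := differentiable_pd hu
  have hv₂ := differentiable_pd hv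
  have second_order (i : Fin 2) : pd (fun y => pd (fun z => u z * v z) i y) i x =
      pd (pd u i) i x * v x + 2 * (pd u i x * pd v i x) + u x * pd (pd v i) i x := by
    simp only [pd_mul (hu₁ _) (hv₁ _)]
    rw [pd_add ((hu₂ i x).fun_mul (hv₁ x)) ((hu₁ x).fun_mul (hv₂ i x)),
      pd_mul (hu₂ i x) (hv₁ x), pd_mul (hu₁ x) (hv₂ i x)]
    ring
  simp only [lap, second_order, Finset.sum_add_distrib, Finset.sum_mul, Finset.mul_sum]

end PartialDerivatives

section PolarDerivatives

/-- The gradient of `u`, as a vector of `ℂ²`. -/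
def grad (u : Plane → ℂ) (x : Plane) : EuclideanSpace ℂ (Fin 2) :=
  WithLp.toLp 2 fun i => pd u i x

/-- The Euler derivative `x · ∇u`, which is `r ∂u/∂r` in polar coordinates. -/
def radialDeriv (u : Plane → ℂ) (x : Plane) : ℂ :=
  x 0 * pd u 0 x + x 1 * pd u 1 x

/-- The rotational derivative `x₁ ∂₂u - x₂ ∂₁u`, which is `∂u/∂θ` in polar coordinates. -/
def angularDeriv (u : Plane → ℂ) (x : Plane) : ℂ :=
  x 0 * pd u 1 x - x 1 * pd u 0 x

variable {u v : Plane → ℂ} {x : Plane}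

lemma grad_congr (h : u =ᶠ[𝓝 x] v) : grad u x = grad v x := by
  simp only [grad, pd_congr h]

lemma radialDeriv_add (hu : DifferentiableAt ℝ u x) (hv : DifferentiableAt ℝ v x) :
    radialDeriv (fun y => u y + v y) x = radialDeriv u x + radialDeriv v x := by
  simp only [radialDeriv, pd_add hu hv]
  ring

lemma angularDeriv_add (hu : DifferentiableAt ℝ u x) (hv : DifferentiableAt ℝ v x) :
    angularDeriv (fun y => u y + v y) x = angularDeriv u x + angularDeriv v x := by
  simp only [angularDeriv, pd_add hu hv]
  ring

lemma radialDeriv_mul (hu : DifferentiableAt ℝ u x) (hv : DifferentiableAt ℝ v x) :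
    radialDeriv (fun y => u y * v y) x = radialDeriv u x * v x + u x * radialDeriv v x := by
  simp only [radialDeriv, pd_mul hu hv]
  ring

lemma angularDeriv_mul (hu : DifferentiableAt ℝ u x) (hv : DifferentiableAt ℝ v x) :
    angularDeriv (fun y => u y * v y) x = angularDeriv u x * v x + u x * angularDeriv v x := by
  simp only [angularDeriv, pd_mul hu hv]
  ring

lemma sq_norm_radialDeriv_add_sq_norm_angularDeriv (u : Plane → ℂ) (x : Plane) :
    ‖radialDeriv u x‖ ^ 2 + ‖angularDeriv u x‖ ^ 2 = (‖x‖ * ‖grad u x‖) ^ 2 := by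
  simp only [mul_pow, EuclideanSpace.norm_sq_eq, Fin.sum_univ_two, grad, radialDeriv,
    angularDeriv, Complex.sq_norm, Complex.normSq_apply, Real.norm_eq_abs, sq_abs,
    Complex.add_re, Complex.add_im, Complex.sub_re, Complex.sub_im, Complex.re_ofReal_mul,
    Complex.im_ofReal_mul]
  ring

lemma norm_radialDeriv_le (u : Plane → ℂ) (x : Plane) :
    ‖radialDeriv u x‖ ≤ ‖x‖ * ‖grad u x‖ :=
  pow_le_pow_iff_left₀ (norm_nonneg _) (by positivity) two_ne_zero |>.1 <| by
    rw [← sq_norm_radialDeriv_add_sq_norm_angularDeriv]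
    exact le_add_of_nonneg_right (sq_nonneg _)

lemma norm_angularDeriv_le (u : Plane → ℂ) (x : Plane) :
    ‖angularDeriv u x‖ ≤ ‖x‖ * ‖grad u x‖ :=
  pow_le_pow_iff_left₀ (norm_nonneg _) (by positivity) two_ne_zero |>.1 <| by
    rw [← sq_norm_radialDeriv_add_sq_norm_angularDeriv]
    exact le_add_of_nonneg_left (sq_nonneg _)

end PolarDerivatives

section ComplexCoordinate

/-- The coordinate `x₁ + d x₂`. For `d = ± i` its powers are the harmonic polynomials
`r ^ n e ^ {± i n θ}`, so that `d`, used below with `d ^ 2 = -1`, is an orientation of the plane. -/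
def complexCoord (d : ℂ) (x : Plane) : ℂ := x 0 + d * x 1

variable {d : ℂ}

lemma contDiff_ofReal_coord {k : WithTop ℕ∞} (i : Fin 2) :
    ContDiff ℝ k fun x : Plane => (x i : ℂ) :=
  Complex.ofRealCLM.contDiff.comp (by fun_prop)

lemma contDiff_complexCoord {k : WithTop ℕ∞} : ContDiff ℝ k (complexCoord d) :=
  (contDiff_ofReal_coord 0).add (contDiff_const.mul (contDiff_ofReal_coord 1))

lemma pd_ofReal_coord (i j : Fin 2) (x : Plane) :
    pd (fun y => (y i : ℂ)) j x = if i = j then 1 else 0 := by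
  have h : HasFDerivAt (fun y : Plane => (y i : ℂ))
      (Complex.ofRealCLM ∘L (EuclideanSpace.proj i : Plane →L[ℝ] ℝ)) x :=
    Complex.ofRealCLM.hasFDerivAt.comp x (EuclideanSpace.proj i : Plane →L[ℝ] ℝ).hasFDerivAt
  rw [pd, h.fderiv]
  simp [PiLp.single_apply, apply_ite Complex.ofReal]

lemma pd_complexCoord (i : Fin 2) (x : Plane) : pd (complexCoord d) i x = ![1, d] i := by
  have hcoord (j : Fin 2) : DifferentiableAt ℝ (fun y : Plane => (y j : ℂ)) x :=
    (contDiff_ofReal_coord j (k := 1)).differentiable one_ne_zero x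
  have hsum : pd (complexCoord d) i x = _ := pd_add (hcoord 0) ((hcoord 1).const_mul d) i
  rw [hsum, pd_const_mul d (hcoord 1), pd_ofReal_coord, pd_ofReal_coord]
  fin_cases i <;> simp

lemma pd_complexCoord_pow (n : ℕ) (i : Fin 2) (x : Plane) :
    pd (fun y => complexCoord d y ^ n) i x = n * ![1, d] i * complexCoord d x ^ (n - 1) := by
  have hd : DifferentiableAt ℝ (complexCoord d) x :=
    (contDiff_complexCoord (k := 1)).differentiable one_ne_zero x
  rw [← pd_complexCoord i x, pd, fderiv_fun_pow n hd]
  simp only [smul_apply, smul_eq_mul, pd]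
  ring

lemma natCast_mul_pow_sub_one_mul (n : ℕ) (z : ℂ) :
    n * z ^ (n - 1) * z = n * z ^ n := by
  cases n <;> simp [pow_succ, mul_assoc]

lemma radialDeriv_complexCoord_pow (n : ℕ) (x : Plane) :
    radialDeriv (fun y => complexCoord d y ^ n) x = n * complexCoord d x ^ n := by
  rw [← natCast_mul_pow_sub_one_mul, radialDeriv, pd_complexCoord_pow, pd_complexCoord_pow]
  simp only [complexCoord, Matrix.cons_val_zero, Matrix.cons_val_one]
  ring

lemma angularDeriv_complexCoord_pow (hd : d ^ 2 = -1) (n : ℕ) (x : Plane) :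
    angularDeriv (fun y => complexCoord d y ^ n) x = d * n * complexCoord d x ^ n := by
  rw [mul_assoc, ← natCast_mul_pow_sub_one_mul, angularDeriv, pd_complexCoord_pow,
    pd_complexCoord_pow]
  generalize complexCoord d x ^ (n - 1) = z
  simp only [complexCoord, Matrix.cons_val_zero, Matrix.cons_val_one]
  linear_combination -(n * z * x 1) * hd

lemma lap_complexCoord_pow (hd : d ^ 2 = -1) (n : ℕ) (x : Plane) :
    lap (fun y => complexCoord d y ^ n) x = 0 := by
  have hpow : DifferentiableAt ℝ (fun y => complexCoord d y ^ (n - 1)) x :=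
    (contDiff_complexCoord.pow _).differentiable one_ne_zero x
  simp only [lap, pd_complexCoord_pow, pd_const_mul _ hpow, Fin.sum_univ_two,
    Matrix.cons_val_zero, Matrix.cons_val_one]
  linear_combination (n * ((n - 1 : ℕ) * complexCoord d x ^ (n - 1 - 1))) * hd

lemma norm_eq_one_of_sq_eq_neg_one (hd : d ^ 2 = -1) : ‖d‖ = 1 := by
  rw [← pow_eq_one_iff_of_nonneg (norm_nonneg d) two_ne_zero, ← norm_pow, hd, norm_neg, norm_one]

lemma norm_complexCoord (hd : d ^ 2 = -1) (x : Plane) : ‖complexCoord d x‖ = ‖x‖ := by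
  have hd' : d = Complex.I ∨ d = -Complex.I := sq_eq_sq_iff_eq_or_eq_neg.1 (by simp [hd])
  rw [← sq_eq_sq₀ (norm_nonneg _) (norm_nonneg _), EuclideanSpace.norm_sq_eq, Complex.sq_norm,
    Complex.normSq_apply]
  rcases hd' with rfl | rfl <;>
    simp only [complexCoord, Complex.add_re, Complex.add_im, Complex.neg_re, Complex.neg_im,
      Complex.re_mul_ofReal, Complex.im_mul_ofReal, Complex.ofReal_re, Complex.ofReal_im,
      Complex.I_re, Complex.I_im, Real.norm_eq_abs, sq_abs, Fin.sum_univ_two] <;>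
    ring

end ComplexCoordinate

section Bracket

/-- The Japanese bracket `⟨x⟩ = √(1 + |x|²)`. It replaces the polar radius, being smooth also at
the origin. -/
def bracket (x : Plane) : ℝ := √(1 + ‖x‖ ^ 2)

variable {F F₁ : ℝ → ℂ} {F₂ : ℂ} {x : Plane}

lemma sq_bracket (x : Plane) : bracket x ^ 2 = 1 + ‖x‖ ^ 2 := Real.sq_sqrt (by positivity)

lemma sq_coord_add_sq_coord (x : Plane) : (x 0 : ℂ) ^ 2 + (x 1 : ℂ) ^ 2 = bracket x ^ 2 - 1 := by
  have h := sq_bracket x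
  rw [EuclideanSpace.real_norm_sq_eq, Fin.sum_univ_two] at h
  rw [← Complex.ofReal_pow (bracket x), h]
  push_cast
  ring

lemma one_le_bracket (x : Plane) : 1 ≤ bracket x :=
  Real.one_le_sqrt.2 (le_add_of_nonneg_right (sq_nonneg _))

lemma bracket_pos (x : Plane) : 0 < bracket x := one_pos.trans_le (one_le_bracket x)

lemma norm_le_bracket (x : Plane) : ‖x‖ ≤ bracket x :=
  Real.le_sqrt_of_sq_le (le_add_of_nonneg_left zero_le_one)

lemma contDiff_bracket {k : WithTop ℕ∞} : ContDiff ℝ k bracket :=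
  (contDiff_const.add (contDiff_norm_sq ℝ)).sqrt fun _ => by positivity

lemma contDiff_comp_bracket (hF : ContDiffOn ℝ 2 F (Set.Ioi 0)) :
    ContDiff ℝ 2 fun y => F (bracket y) :=
  hF.comp_contDiff contDiff_bracket bracket_pos

lemma pd_comp_bracket (hF : HasDerivAt F (F₁ (bracket x)) (bracket x)) (i : Fin 2) :
    pd (fun y => F (bracket y)) i x = F₁ (bracket x) / bracket x * x i := by
  have hb : HasFDerivAt bracket _ x :=
    ((hasStrictFDerivAt_norm_sq x).hasFDerivAt.const_add 1).sqrt (by positivity)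
  have h : HasFDerivAt (fun y => F (bracket y)) _ x := hF.hasFDerivAt.comp x hb
  rw [pd, h.fderiv]
  simp only [ContinuousLinearMap.comp_apply, smul_apply,
    ContinuousLinearMap.toSpanSingleton_apply, innerSL_apply_apply,
    EuclideanSpace.inner_single_right, conj_trivial, one_mul, ← bracket.eq_1, nsmul_eq_mul,
    Complex.real_smul, smul_eq_mul]
  push_cast
  ring

lemma radialDeriv_comp_bracket (hF : HasDerivAt F (F₁ (bracket x)) (bracket x)) :
    radialDeriv (fun y => F (bracket y)) x = (bracket x - 1 / bracket x) * F₁ (bracket x) := by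
  have hρ₀ : (bracket x : ℂ) ≠ 0 := Complex.ofReal_ne_zero.2 (bracket_pos x).ne'
  rw [radialDeriv, pd_comp_bracket hF, pd_comp_bracket hF]
  field_simp
  linear_combination F₁ (bracket x) * sq_coord_add_sq_coord x

lemma angularDeriv_comp_bracket (hF : HasDerivAt F (F₁ (bracket x)) (bracket x)) :
    angularDeriv (fun y => F (bracket y)) x = 0 := by
  rw [angularDeriv, pd_comp_bracket hF, pd_comp_bracket hF]
  ring

lemma sum_pd_comp_bracket_mul_pd (hF : HasDerivAt F (F₁ (bracket x)) (bracket x))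
    (v : Plane → ℂ) :
    ∑ i, pd (fun y => F (bracket y)) i x * pd v i x =
      F₁ (bracket x) / bracket x * radialDeriv v x := by
  simp only [pd_comp_bracket hF, Fin.sum_univ_two, radialDeriv]
  ring

lemma lap_comp_bracket (hF : ∀ ρ, 0 < ρ → HasDerivAt F (F₁ ρ) ρ)
    (hF₁ : HasDerivAt F₁ F₂ (bracket x)) :
    lap (fun y => F (bracket y)) x = (1 - 1 / bracket x ^ 2) * F₂ +
      (1 / bracket x + 1 / bracket x ^ 3) * F₁ (bracket x) := by
  set ρ := bracket x with hρ
  have hρ₀ : (ρ : ℂ) ≠ 0 := Complex.ofReal_ne_zero.2 (bracket_pos x).ne'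
  have hquot : HasDerivAt (fun s : ℝ => F₁ s / s) ((F₂ * ρ - F₁ ρ * 1) / ρ ^ 2) ρ :=
    hF₁.div (hasDerivAt_id ρ).ofReal_comp hρ₀
  have second_order (i : Fin 2) : pd (pd (fun y => F (bracket y)) i) i x =
      (F₂ * ρ - F₁ ρ) / ρ ^ 3 * x i ^ 2 + F₁ ρ / ρ := by
    have hpd : pd (fun y => F (bracket y)) i = fun y => F₁ (bracket y) / bracket y * y i :=
      funext fun y => pd_comp_bracket (hF _ (bracket_pos y)) i
    have hquot' : DifferentiableAt ℝ (fun y => F₁ (bracket y) / bracket y) x :=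
      DifferentiableAt.fun_comp' x hquot.differentiableAt
        (contDiff_bracket.differentiable one_ne_zero x)
    rw [hpd, pd_mul hquot' ((contDiff_ofReal_coord i (k := 1)).differentiable one_ne_zero x),
      pd_comp_bracket (F := fun s => F₁ s / s)
        (F₁ := fun _ => (F₂ * ρ - F₁ ρ * 1) / ρ ^ 2) hquot, pd_ofReal_coord, if_pos rfl, ← hρ]
    field_simp
  rw [lap, Fin.sum_univ_two, second_order, second_order]
  field_simp
  linear_combination (F₂ * ρ - F₁ ρ) * sq_coord_add_sq_coord x

lemma lap_comp_bracket_mul_complexCoord_pow {d : ℂ} (hd : d ^ 2 = -1) (n : ℕ)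
    (hF : ContDiffOn ℝ 2 F (Set.Ioi 0)) (hF' : ∀ ρ, 0 < ρ → HasDerivAt F (F₁ ρ) ρ)
    (hF₁ : HasDerivAt F₁ F₂ (bracket x)) :
    lap (fun y => F (bracket y) * complexCoord d y ^ n) x =
      ((1 - 1 / bracket x ^ 2) * F₂ +
        (1 / bracket x + 1 / bracket x ^ 3 + 2 * (n / bracket x)) * F₁ (bracket x)) *
        complexCoord d x ^ n := by
  rw [lap_mul (contDiff_comp_bracket hF) (contDiff_complexCoord.pow n),
    lap_comp_bracket hF' hF₁, sum_pd_comp_bracket_mul_pd (hF' _ (bracket_pos x)),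
    radialDeriv_complexCoord_pow, lap_complexCoord_pow hd]
  ring

end Bracket

section Waves

/-- The plane-wave-like factor `e ^ {-a⟨x⟩} ((x₁ + d x₂) / ⟨x⟩) ^ n`: exponentially decaying in the
radial direction and, up to an error `O(n / |x|²)` in the modulus, equal to `e ^ {± i n θ}` in the
angular one. -/
def carrier (a : ℂ) (n : ℕ) (d : ℂ) (x : Plane) : ℂ :=
  Complex.exp (-a * bracket x) * (complexCoord d x / bracket x) ^ n

/-- The carrier modulated by the radial profile `P`. -/
def wave (a : ℂ) (n : ℕ) (P : ℝ → ℂ) (d : ℂ) (x : Plane) : ℂ :=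
  carrier a n d x * P (bracket x)

/-- The radial factor of the carrier: what remains after splitting off the harmonic polynomial
`(x₁ + d x₂) ^ n`. -/
def amplitude (a : ℂ) (n : ℕ) (ρ : ℝ) : ℂ := Complex.exp (-a * ρ) / ρ ^ n

/-- The operator `A⁻¹ (d/dρ) A`, that is, the derivative conjugated by the amplitude `A`. -/
def twistedDeriv (a : ℂ) (n : ℕ) (P : ℝ → ℂ) (ρ : ℝ) : ℂ := deriv P ρ - (a + n / ρ) * P ρ

/-- The exponential envelope `|e ^ {-a⟨x⟩}|` of the carriers. -/
def envelope (a : ℂ) (x : Plane) : ℝ := Real.exp (-(a.re * bracket x))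

variable {a d : ℂ} {n : ℕ} {P : ℝ → ℂ} {ρ : ℝ} {x : Plane}

lemma hasDerivAt_amplitude_mul (hρ : 0 < ρ) (hP : DifferentiableAt ℝ P ρ) :
    HasDerivAt (fun s => amplitude a n s * P s) (amplitude a n ρ * twistedDeriv a n P ρ) ρ := by
  have hρ₀ : (ρ : ℂ) ≠ 0 := Complex.ofReal_ne_zero.2 hρ.ne'
  have hid : HasDerivAt (fun s : ℝ => (s : ℂ)) 1 ρ := (hasDerivAt_id ρ).ofReal_comp
  have h : HasDerivAt (fun s => amplitude a n s * P s) _ ρ :=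
    ((hid.const_mul (-a)).cexp.fun_div (hid.fun_pow n) (pow_ne_zero n hρ₀)).mul hP.hasDerivAt
  convert h using 1
  rw [amplitude, twistedDeriv]
  rcases n with _ | n
  · simp only [pow_zero, div_one, Nat.cast_zero, zero_mul, zero_div, mul_zero, sub_zero, one_pow]
    ring
  · simp only [Nat.add_sub_cancel]
    field_simp
    ring

lemma contDiffOn_amplitude : ContDiffOn ℝ 2 (amplitude a n) (Set.Ioi 0) := by
  have hid : ContDiff ℝ 2 fun s : ℝ => (s : ℂ) := Complex.ofRealCLM.contDiff
  exact (contDiff_const.mul hid).cexp.contDiffOn.mul <| (hid.pow n).contDiffOn.inv fun s hs =>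
    pow_ne_zero n (Complex.ofReal_ne_zero.2 (ne_of_gt hs))

lemma differentiableAt_of_contDiffOn_Ioi (hP : ContDiffOn ℝ 2 P (Set.Ioi 0)) (hρ : 0 < ρ) :
    DifferentiableAt ℝ P ρ :=
  (hP.differentiableOn two_ne_zero).differentiableAt (Ioi_mem_nhds hρ)

lemma differentiableAt_deriv_of_contDiffOn_Ioi (hP : ContDiffOn ℝ 2 P (Set.Ioi 0)) (hρ : 0 < ρ) :
    DifferentiableAt ℝ (deriv P) ρ :=
  ((hP.deriv_of_isOpen (m := 1) isOpen_Ioi (by norm_num)).differentiableOn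
    one_ne_zero).differentiableAt (Ioi_mem_nhds hρ)

lemma hasDerivAt_twistedDeriv (hP : ContDiffOn ℝ 2 P (Set.Ioi 0)) (hρ : 0 < ρ) :
    HasDerivAt (twistedDeriv a n P)
      (deriv (deriv P) ρ - (-(n / ρ ^ 2) * P ρ + (a + n / ρ) * deriv P ρ)) ρ := by
  have hρ₀ : (ρ : ℂ) ≠ 0 := Complex.ofReal_ne_zero.2 hρ.ne'
  have hid : HasDerivAt (fun s : ℝ => (s : ℂ)) 1 ρ := (hasDerivAt_id ρ).ofReal_comp
  have hcoeff : HasDerivAt (fun s : ℝ => a + n / (s : ℂ)) (-(n / ρ ^ 2)) ρ := by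
    simpa only [zero_mul, zero_sub, mul_one, neg_div] using
      ((hasDerivAt_const ρ (n : ℂ)).fun_div hid hρ₀).const_add a
  exact (differentiableAt_deriv_of_contDiffOn_Ioi hP hρ).hasDerivAt.sub
    (hcoeff.mul (differentiableAt_of_contDiffOn_Ioi hP hρ).hasDerivAt)

lemma twistedDeriv_twistedDeriv (hP : ContDiffOn ℝ 2 P (Set.Ioi 0)) (hρ : 0 < ρ) :
    twistedDeriv a n (twistedDeriv a n P) ρ = deriv (deriv P) ρ - 2 * (a + n / ρ) * deriv P ρ +
      ((a + n / ρ) ^ 2 + n / ρ / ρ) * P ρ := by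
  rw [twistedDeriv, (hasDerivAt_twistedDeriv hP hρ).deriv, twistedDeriv]
  ring

lemma carrier_eq_amplitude_mul (a : ℂ) (n : ℕ) (d : ℂ) (x : Plane) :
    carrier a n d x = amplitude a n (bracket x) * complexCoord d x ^ n := by
  rw [carrier, amplitude, div_pow]
  ring

lemma wave_eq_amplitude_mul (a : ℂ) (n : ℕ) (P : ℝ → ℂ) (d : ℂ) : wave a n P d = fun x =>
    amplitude a n (bracket x) * P (bracket x) * complexCoord d x ^ n := by
  funext x
  rw [wave, carrier_eq_amplitude_mul]
  ring

lemma contDiff_wave (hP : ContDiffOn ℝ 2 P (Set.Ioi 0)) : ContDiff ℝ 2 (wave a n P d) := by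
  rw [wave_eq_amplitude_mul]
  exact (contDiff_comp_bracket (contDiffOn_amplitude.mul hP)).mul (contDiff_complexCoord.pow n)

lemma differentiableAt_comp_bracket {F : ℝ → ℂ} (hF : DifferentiableAt ℝ F (bracket x)) :
    DifferentiableAt ℝ (fun y => F (bracket y)) x :=
  hF.fun_comp' x (contDiff_bracket.differentiable one_ne_zero x)

lemma lap_wave (hd : d ^ 2 = -1) (hP : ContDiffOn ℝ 2 P (Set.Ioi 0)) (x : Plane) :
    lap (wave a n P d) x = carrier a n d x *
      ((1 - 1 / bracket x ^ 2) * twistedDeriv a n (twistedDeriv a n P) (bracket x) +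
        (1 / bracket x + 1 / bracket x ^ 3 + 2 * (n / bracket x)) *
          twistedDeriv a n P (bracket x)) := by
  rw [wave_eq_amplitude_mul, lap_comp_bracket_mul_complexCoord_pow hd n
    (F := fun s => amplitude a n s * P s) (contDiffOn_amplitude.mul hP)
    (fun ρ hρ => hasDerivAt_amplitude_mul hρ (differentiableAt_of_contDiffOn_Ioi hP hρ))
    (hasDerivAt_amplitude_mul (bracket_pos x)
      (hasDerivAt_twistedDeriv hP (bracket_pos x)).differentiableAt), carrier_eq_amplitude_mul]
  ring

/-- The error terms of order `ρ⁻¹` in the equation for a wave of radial profile `P`. -/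
def waveError (a : ℂ) (n : ℕ) (P : ℝ → ℂ) (ρ : ℝ) : ℂ :=
  n / ρ / ρ * P ρ + (1 / ρ + 1 / ρ ^ 3) * twistedDeriv a n P ρ -
    1 / ρ ^ 2 * twistedDeriv a n (twistedDeriv a n P) ρ

lemma lap_wave_add_mul_wave (hd : d ^ 2 = -1) (hP : ContDiffOn ℝ 2 P (Set.Ioi 0)) (lam : ℂ)
    (x : Plane) :
    lap (wave a n P d) x + lam * wave a n P d x = carrier a n d x *
      (deriv (deriv P) (bracket x) - 2 * a * deriv P (bracket x) +
        (a ^ 2 + lam - (n / bracket x) ^ 2) * P (bracket x) + waveError a n P (bracket x)) := by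
  have hT : twistedDeriv a n P (bracket x) =
      deriv P (bracket x) - (a + n / bracket x) * P (bracket x) := rfl
  have hTT := twistedDeriv_twistedDeriv (a := a) (n := n) hP (bracket_pos x)
  rw [lap_wave hd hP, wave, waveError]
  linear_combination carrier a n d x * hTT + 2 * (n / bracket x) * carrier a n d x * hT

lemma radialDeriv_wave_add_mul_wave (hP : ContDiffOn ℝ 2 P (Set.Ioi 0)) (d : ℂ) (x : Plane) :
    radialDeriv (wave a n P d) x + a * bracket x * wave a n P d x = carrier a n d x *
      (bracket x * deriv P (bracket x) - 1 / bracket x * twistedDeriv a n P (bracket x)) := by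
  have hρ₀ : (bracket x : ℂ) ≠ 0 := Complex.ofReal_ne_zero.2 (bracket_pos x).ne'
  have hAP := hasDerivAt_amplitude_mul (a := a) (n := n) (bracket_pos x)
    (differentiableAt_of_contDiffOn_Ioi hP (bracket_pos x))
  rw [wave, wave_eq_amplitude_mul, radialDeriv_mul
    (differentiableAt_comp_bracket hAP.differentiableAt)
    ((contDiff_complexCoord.pow n).differentiable one_ne_zero x),
    radialDeriv_comp_bracket (F₁ := fun s => amplitude a n s * twistedDeriv a n P s) hAP,
    radialDeriv_complexCoord_pow, carrier_eq_amplitude_mul, twistedDeriv]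
  field_simp
  ring

lemma angularDeriv_wave (hd : d ^ 2 = -1) (hP : ContDiffOn ℝ 2 P (Set.Ioi 0)) (x : Plane) :
    angularDeriv (wave a n P d) x = d * n * wave a n P d x := by
  have hAP := hasDerivAt_amplitude_mul (a := a) (n := n) (bracket_pos x)
    (differentiableAt_of_contDiffOn_Ioi hP (bracket_pos x))
  rw [wave_eq_amplitude_mul, angularDeriv_mul
    (differentiableAt_comp_bracket hAP.differentiableAt)
    ((contDiff_complexCoord.pow n).differentiable one_ne_zero x),
    angularDeriv_comp_bracket (F₁ := fun s => amplitude a n s * twistedDeriv a n P s) hAP,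
    angularDeriv_complexCoord_pow hd]
  ring

lemma envelope_pos (a : ℂ) (x : Plane) : 0 < envelope a x := Real.exp_pos _

lemma norm_carrier (hd : d ^ 2 = -1) (x : Plane) :
    ‖carrier a n d x‖ = envelope a x * (‖x‖ / bracket x) ^ n := by
  rw [carrier, envelope, norm_mul, norm_pow, norm_div, norm_complexCoord hd, Complex.norm_exp,
    Complex.norm_real, Real.norm_of_nonneg (bracket_pos x).le, neg_mul, Complex.neg_re,
    Complex.re_mul_ofReal]

lemma norm_carrier_le (hd : d ^ 2 = -1) (x : Plane) :
    ‖carrier a n d x‖ ≤ envelope a x := by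
  rw [norm_carrier hd]
  exact mul_le_of_le_one_right (envelope_pos a x).le (pow_le_one₀
    (div_nonneg (norm_nonneg x) (bracket_pos x).le)
    (div_le_one_of_le₀ (norm_le_bracket x) (bracket_pos x).le))

lemma half_envelope_le_norm_carrier (hd : d ^ 2 = -1) (hn : 2 * n ≤ bracket x ^ 2) :
    envelope a x / 2 ≤ ‖carrier a n d x‖ := by
  have hρ := bracket_pos x
  have hq₀ : 0 ≤ ‖x‖ / bracket x := div_nonneg (norm_nonneg x) hρ.le
  have hq₁ : ‖x‖ / bracket x ≤ 1 := div_le_one_of_le₀ (norm_le_bracket x) hρ.le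
  have hbernoulli : 1 / 2 ≤ (‖x‖ / bracket x) ^ n :=
    calc (1 / 2 : ℝ) ≤ 1 + n * (-(1 / bracket x ^ 2)) := by
          field_simp
          linarith
      _ ≤ (1 + -(1 / bracket x ^ 2)) ^ n := one_add_mul_le_pow (by
          have : 1 / bracket x ^ 2 ≤ 1 := div_le_one_of_le₀ (one_le_pow₀ (one_le_bracket x))
            (by positivity)
          linarith) n
      _ = ((‖x‖ / bracket x) ^ 2) ^ n := by
          congr 1
          field_simp
          linear_combination sq_bracket x
      _ ≤ (‖x‖ / bracket x) ^ n :=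
          pow_le_pow_left₀ (sq_nonneg _) (pow_le_of_le_one hq₀ hq₁ two_ne_zero) n
  rw [norm_carrier hd, div_eq_mul_one_div]
  exact mul_le_mul_of_nonneg_left hbernoulli (envelope_pos a x).le

end Waves

section ApproximateWaves

/-- A profile of modulus at most one whose first two derivatives are `O(ρ ^ {-1/2})` at `ρ`. -/
structure IsSlowProfile (K : ℝ) (P : ℝ → ℂ) (ρ : ℝ) : Prop where
  norm_le : ‖P ρ‖ ≤ 1
  norm_deriv_le : ‖deriv P ρ‖ ≤ K / √ρ
  norm_deriv_deriv_le : ‖deriv (deriv P) ρ‖ ≤ K / √ρ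

/-- At the point `x`, the function `V` satisfies up to `ε` the equations `ΔV + λV = 0`,
`∂_r V = -aV` and `r⁻¹ ∂_θ V = dBV` of a wave with constant frequencies. -/
structure IsApproxWave (ε : ℝ) (a : ℂ) (B : ℝ) (lam d : ℂ) (V : Plane → ℂ) (x : Plane) :
    Prop where
  eigen : ‖lap V x + lam * V x‖ ≤ ε
  radial : ‖radialDeriv V x + a * bracket x * V x‖ ≤ bracket x * ε
  angular : ‖angularDeriv V x - d * B * bracket x * V x‖ ≤ bracket x * ε

variable {a d lam : ℂ} {n : ℕ} {P : ℝ → ℂ} {B K L ε ρ : ℝ} {V V' : Plane → ℂ} {x : Plane}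

lemma div_sqrt_le_self (hK : 0 ≤ K) (hρ : 1 ≤ ρ) : K / √ρ ≤ K :=
  div_le_self hK (Real.one_le_sqrt.2 hρ)

lemma norm_natCast_div_ofReal (n : ℕ) (hρ : 0 ≤ ρ) : ‖(n / ρ : ℂ)‖ = n / ρ := by
  rw [norm_div, Complex.norm_natCast, Complex.norm_real, Real.norm_of_nonneg hρ]

lemma IsSlowProfile.norm_twistedDeriv_le (hP : IsSlowProfile K P ρ) (hK : 0 ≤ K) (hρ : 1 ≤ ρ)
    (hL : ‖a‖ + n / ρ ≤ L) : ‖twistedDeriv a n P ρ‖ ≤ K + L := by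
  have hρ₀ : 0 ≤ ρ := zero_le_one.trans hρ
  calc ‖twistedDeriv a n P ρ‖ ≤ ‖deriv P ρ‖ + ‖a + n / ρ‖ * ‖P ρ‖ := by
        rw [← norm_mul]
        exact norm_sub_le _ _
    _ ≤ K + L * 1 := by
        gcongr
        · exact hP.norm_deriv_le.trans (div_sqrt_le_self hK hρ)
        · exact (add_nonneg (norm_nonneg a) (by positivity)).trans hL
        · exact (norm_add_le _ _).trans (by rwa [norm_natCast_div_ofReal n hρ₀])
        · exact hP.norm_le
    _ = K + L := by ring

lemma IsSlowProfile.norm_twistedDeriv_twistedDeriv_le (hP : IsSlowProfile K P ρ)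
    (hP₂ : ContDiffOn ℝ 2 P (Set.Ioi 0)) (hK : 0 ≤ K) (hρ : 1 ≤ ρ) (hL : ‖a‖ + n / ρ ≤ L) :
    ‖twistedDeriv a n (twistedDeriv a n P) ρ‖ ≤ K + 2 * L * K + (L ^ 2 + L) := by
  have hρ₀ : 0 < ρ := one_pos.trans_le hρ
  have hfreq : ‖(a + n / ρ : ℂ)‖ ≤ L :=
    (norm_add_le _ _).trans (by rwa [norm_natCast_div_ofReal n hρ₀.le])
  have hquot : ‖(n / ρ / ρ : ℂ)‖ ≤ L := by
    rw [norm_div, norm_natCast_div_ofReal n hρ₀.le, Complex.norm_real,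
      Real.norm_of_nonneg hρ₀.le]
    exact (div_le_self (by positivity) hρ).trans (by linarith [norm_nonneg a])
  have hL₀ : 0 ≤ L := (norm_nonneg _).trans hfreq
  rw [twistedDeriv_twistedDeriv hP₂ hρ₀]
  calc _ ≤ ‖deriv (deriv P) ρ‖ + 2 * ‖(a + n / ρ : ℂ)‖ * ‖deriv P ρ‖ +
        (‖(a + n / ρ : ℂ)‖ ^ 2 + ‖(n / ρ / ρ : ℂ)‖) * ‖P ρ‖ := by
        refine (norm_add_le _ _).trans (add_le_add ((norm_sub_le _ _).trans ?_) ?_)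
        · simp only [norm_mul, Complex.norm_ofNat, le_refl]
        · rw [norm_mul, ← norm_pow]
          gcongr
          exact norm_add_le _ _
    _ ≤ K + 2 * L * K + (L ^ 2 + L) * 1 := by
        gcongr
        · exact hP.norm_deriv_deriv_le.trans (div_sqrt_le_self hK hρ)
        · exact hP.norm_deriv_le.trans (div_sqrt_le_self hK hρ)
        · exact hP.norm_le
    _ = K + 2 * L * K + (L ^ 2 + L) := by ring

lemma IsSlowProfile.norm_waveError_le (hP : IsSlowProfile K P ρ)
    (hP₂ : ContDiffOn ℝ 2 P (Set.Ioi 0)) (hK : 0 ≤ K) (hρ : 1 ≤ ρ) (hL : ‖a‖ + n / ρ ≤ L) :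
    ‖waveError a n P ρ‖ ≤ (K + L + 2) ^ 2 / ρ := by
  have hρ₀ : 0 < ρ := one_pos.trans_le hρ
  have hν : n / ρ ≤ L := by linarith [norm_nonneg a]
  have hL₀ : 0 ≤ L := le_trans (by positivity) hν
  have norm_inv_pow (k : ℕ) : ‖(1 / ρ ^ k : ℂ)‖ = 1 / ρ ^ k := by
    rw [norm_div, norm_one, norm_pow, Complex.norm_real, Real.norm_of_nonneg hρ₀.le]
  have inv_pow_le (k : ℕ) (hk : 1 ≤ k) : 1 / ρ ^ k ≤ 1 / ρ :=
    one_div_le_one_div_of_le hρ₀ (le_self_pow₀ hρ (by lia))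
  have h₁ : ‖(n / ρ / ρ * P ρ : ℂ)‖ ≤ L / ρ * 1 := by
    rw [norm_mul, norm_div, norm_natCast_div_ofReal n hρ₀.le, Complex.norm_real,
      Real.norm_of_nonneg hρ₀.le]
    exact mul_le_mul (by gcongr) hP.norm_le (norm_nonneg _) (by linarith [div_nonneg hL₀ hρ₀.le])
  have h₂ : ‖(1 / ρ + 1 / ρ ^ 3) * twistedDeriv a n P ρ‖ ≤ (1 / ρ + 1 / ρ) * (K + L) := by
    rw [norm_mul]
    gcongr
    · calc ‖(1 / ρ + 1 / ρ ^ 3 : ℂ)‖ ≤ ‖(1 / ρ ^ 1 : ℂ)‖ + ‖(1 / ρ ^ 3 : ℂ)‖ := by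
            rw [pow_one]
            exact norm_add_le _ _
        _ ≤ 1 / ρ + 1 / ρ := by
            rw [norm_inv_pow, norm_inv_pow]
            exact add_le_add (inv_pow_le 1 le_rfl) (inv_pow_le 3 (by lia))
    · exact hP.norm_twistedDeriv_le hK hρ hL
  have h₃ : ‖1 / (ρ : ℂ) ^ 2 * twistedDeriv a n (twistedDeriv a n P) ρ‖ ≤
      1 / ρ * (K + 2 * L * K + (L ^ 2 + L)) := by
    rw [norm_mul, norm_inv_pow]
    exact mul_le_mul (inv_pow_le 2 (by lia))
      (hP.norm_twistedDeriv_twistedDeriv_le hP₂ hK hρ hL) (norm_nonneg _) (by positivity)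
  calc ‖waveError a n P ρ‖ ≤ L / ρ * 1 + (1 / ρ + 1 / ρ) * (K + L) +
        1 / ρ * (K + 2 * L * K + (L ^ 2 + L)) :=
        (norm_sub_le _ _).trans (add_le_add ((norm_add_le _ _).trans (add_le_add h₁ h₂)) h₃)
    _ = (3 * K + 4 * L + 2 * L * K + L ^ 2) / ρ := by ring
    _ ≤ (K + L + 2) ^ 2 / ρ := by
        gcongr
        nlinarith [sq_nonneg K]

section Frequency

variable (hB : 0 ≤ B) (hρ : 1 ≤ ρ) (hn : |n - B * ρ| ≤ 3 * B * √ρ)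
include hB hρ hn

lemma natCast_div_le : n / ρ ≤ 4 * B := by
  have hsqrt : √ρ ≤ ρ := Real.sqrt_le_self_iff.2 (.inr hρ)
  rw [div_le_iff₀ (one_pos.trans_le hρ)]
  nlinarith [abs_le.1 hn]

lemma abs_sq_sub_sq_natCast_div_le : |B ^ 2 - (n / ρ) ^ 2| ≤ 15 * B ^ 2 / √ρ := by
  have hρ₀ : 0 < ρ := one_pos.trans_le hρ
  have hdiff : |B - n / ρ| ≤ 3 * B / √ρ :=
    calc |B - n / ρ| = |n - B * ρ| / ρ := by
          rw [abs_sub_comm, ← abs_of_pos hρ₀, ← abs_div, abs_of_pos hρ₀]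
          congr 1
          field_simp
      _ ≤ 3 * B * √ρ / ρ := by gcongr
      _ = 3 * B / √ρ := by rw [mul_div_assoc, Real.sqrt_div_self', mul_one_div]
  have hsum : |B + n / ρ| ≤ 5 * B := by
    rw [abs_of_nonneg (by positivity)]
    linarith [natCast_div_le hB hρ hn]
  calc |B ^ 2 - (n / ρ) ^ 2| = |B - n / ρ| * |B + n / ρ| := by
        rw [← abs_mul]
        ring_nf
    _ ≤ 3 * B / √ρ * (5 * B) := by gcongr
    _ = 15 * B ^ 2 / √ρ := by ring

end Frequency

lemma norm_lap_wave_add_mul_wave_le (hd : d ^ 2 = -1) (hP₂ : ContDiffOn ℝ 2 P (Set.Ioi 0))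
    (hP : IsSlowProfile K P (bracket x)) (hK : 0 ≤ K) (hB : 0 ≤ B) (ha : a ^ 2 + lam = B ^ 2)
    (hn : |n - B * bracket x| ≤ 3 * B * √(bracket x)) :
    ‖lap (wave a n P d) x + lam * wave a n P d x‖ ≤
      (K + 2 * ‖a‖ * K + 15 * B ^ 2 + (K + (‖a‖ + 4 * B) + 2) ^ 2) * envelope a x /
        √(bracket x) := by
  have hρ := one_le_bracket x
  set ρ := bracket x with hρ_def
  have hfreq : ‖a ^ 2 + lam - (n / ρ) ^ 2‖ ≤ 15 * B ^ 2 / √ρ := by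
    rw [ha, ← Complex.ofReal_natCast, ← Complex.ofReal_div, ← Complex.ofReal_pow,
      ← Complex.ofReal_pow, ← Complex.ofReal_sub, Complex.norm_real]
    exact abs_sq_sub_sq_natCast_div_le hB hρ hn
  have herror : ‖waveError a n P ρ‖ ≤ (K + (‖a‖ + 4 * B) + 2) ^ 2 / √ρ :=
    (hP.norm_waveError_le hP₂ hK hρ (add_le_add_right (natCast_div_le hB hρ hn) _)).trans
      (div_le_div_of_nonneg_left (sq_nonneg _) (by positivity)
        (Real.sqrt_le_self_iff.2 (.inr hρ)))
  rw [lap_wave_add_mul_wave hd hP₂, norm_mul, ← hρ_def]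
  calc _ ≤ envelope a x * (‖deriv (deriv P) ρ‖ + 2 * ‖a‖ * ‖deriv P ρ‖ +
        ‖a ^ 2 + lam - (n / ρ) ^ 2‖ * ‖P ρ‖ + ‖waveError a n P ρ‖) := by
        gcongr
        · exact (envelope_pos a x).le
        · exact norm_carrier_le hd x
        · refine (norm_add₃_le).trans (add_le_add_left (add_le_add ?_ (norm_mul_le _ _)) _)
          refine (norm_sub_le _ _).trans_eq ?_
          simp only [norm_mul, Complex.norm_ofNat]
    _ ≤ envelope a x * (K / √ρ + 2 * ‖a‖ * (K / √ρ) + 15 * B ^ 2 / √ρ * 1 +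
        (K + (‖a‖ + 4 * B) + 2) ^ 2 / √ρ) := by
        have := envelope_pos a x
        gcongr
        exacts [hP.norm_deriv_deriv_le, hP.norm_deriv_le, hP.norm_le]
    _ = _ := by ring

lemma norm_radialDeriv_wave_add_le (hd : d ^ 2 = -1) (hP₂ : ContDiffOn ℝ 2 P (Set.Ioi 0))
    (hP : IsSlowProfile K P (bracket x)) (hK : 0 ≤ K) (hL : ‖a‖ + n / bracket x ≤ L) :
    ‖radialDeriv (wave a n P d) x + a * bracket x * wave a n P d x‖ ≤
      bracket x * ((2 * K + L) * envelope a x / √(bracket x)) := by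
  have hρ := one_le_bracket x
  have hE := envelope_pos a x
  rw [radialDeriv_wave_add_mul_wave hP₂, norm_mul]
  set ρ := bracket x
  have hsqrt : 1 / ρ ≤ ρ / √ρ := by
    rw [Real.div_sqrt]
    exact (div_le_one_of_le₀ hρ (by linarith)).trans (Real.one_le_sqrt.2 hρ)
  calc _ ≤ envelope a x * (ρ * ‖deriv P ρ‖ + 1 / ρ * ‖twistedDeriv a n P ρ‖) := by
        gcongr
        · exact norm_carrier_le hd x
        · refine (norm_sub_le _ _).trans_eq ?_
          rw [norm_mul, norm_mul, norm_div, norm_one, Complex.norm_real,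
            Real.norm_of_nonneg (bracket_pos x).le]
    _ ≤ envelope a x * (ρ * (K / √ρ) + ρ / √ρ * (K + L)) := by
        gcongr
        exacts [hP.norm_deriv_le, hP.norm_twistedDeriv_le hK hρ hL]
    _ = _ := by ring

lemma norm_angularDeriv_wave_sub_le (hd : d ^ 2 = -1) (hP₂ : ContDiffOn ℝ 2 P (Set.Ioi 0))
    (hP : ‖P (bracket x)‖ ≤ 1) (hn : |n - B * bracket x| ≤ 3 * B * √(bracket x)) :
    ‖angularDeriv (wave a n P d) x - d * B * bracket x * wave a n P d x‖ ≤
      bracket x * (3 * B * envelope a x / √(bracket x)) := by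
  have hfreq : ‖(n - B * bracket x : ℂ)‖ ≤ 3 * B * √(bracket x) := by
    rw [← Complex.ofReal_natCast, ← Complex.ofReal_mul, ← Complex.ofReal_sub, Complex.norm_real]
    exact hn
  have hV : ‖wave a n P d x‖ ≤ envelope a x * 1 := by
    rw [wave, norm_mul]
    exact mul_le_mul (norm_carrier_le hd x) hP (norm_nonneg _) (envelope_pos a x).le
  calc _ = ‖d * (n - B * bracket x) * wave a n P d x‖ := by
        rw [angularDeriv_wave hd hP₂]
        ring_nf
    _ ≤ 3 * B * √(bracket x) * (envelope a x * 1) := by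
        rw [norm_mul, norm_mul, norm_eq_one_of_sq_eq_neg_one hd, one_mul]
        gcongr
        exact (norm_nonneg _).trans hfreq
    _ = 3 * B * envelope a x * (bracket x / √(bracket x)) := by
        rw [Real.div_sqrt]
        ring
    _ = _ := by ring

lemma exists_isApproxWave_wave (hK : 0 ≤ K) (hB : 0 ≤ B) (ha : a ^ 2 + lam = B ^ 2) :
    ∃ C > 0, ∀ (n : ℕ) (P : ℝ → ℂ) (d : ℂ) (x : Plane), d ^ 2 = -1 →
      ContDiffOn ℝ 2 P (Set.Ioi 0) → IsSlowProfile K P (bracket x) →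
      |n - B * bracket x| ≤ 3 * B * √(bracket x) →
      IsApproxWave (C * envelope a x / √(bracket x)) a B lam d (wave a n P d) x := by
  set C := K + 2 * ‖a‖ * K + 15 * B ^ 2 + (K + (‖a‖ + 4 * B) + 2) ^ 2
  have hpos : 0 ≤ 2 * ‖a‖ * K + 15 * B ^ 2 := by positivity
  have hsq : 4 * (K + (‖a‖ + 4 * B)) ≤ (K + (‖a‖ + 4 * B) + 2) ^ 2 := by
    nlinarith [sq_nonneg (K + (‖a‖ + 4 * B))]
  have h_radial : 2 * K + (‖a‖ + 4 * B) ≤ C := by linarith [norm_nonneg a]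
  have h_angular : 3 * B ≤ C := by linarith [norm_nonneg a]
  refine ⟨C, by positivity, fun n P d x hd hP₂ hP hn => ?_⟩
  have hE := envelope_pos a x
  have hρ := bracket_pos x
  exact ⟨norm_lap_wave_add_mul_wave_le hd hP₂ hP hK hB ha hn,
    (norm_radialDeriv_wave_add_le hd hP₂ hP hK
      (add_le_add_right (natCast_div_le hB (one_le_bracket x) hn) _)).trans (by gcongr),
    (norm_angularDeriv_wave_sub_le hd hP₂ hP.norm_le hn).trans (by gcongr)⟩

section Pair

variable (hV : IsApproxWave ε a B lam d V x) (hV' : IsApproxWave ε a B lam (-d) V' x)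
  (hV₂ : ContDiff ℝ 2 V) (hV'₂ : ContDiff ℝ 2 V')
include hV hV' hV₂ hV'₂

lemma norm_lap_add_add_mul_add_le :
    ‖lap (fun y => V y + V' y) x + lam * (V x + V' x)‖ ≤ 2 * ε := by
  rw [lap_add hV₂ hV'₂, mul_add, add_add_add_comm, two_mul]
  exact (norm_add_le _ _).trans (add_le_add hV.eigen hV'.eigen)

lemma norm_mul_norm_add_le :
    ‖a‖ * ‖V x + V' x‖ ≤ ‖grad (fun y => V y + V' y) x‖ + 2 * ε := by
  have hρ := bracket_pos x
  refine le_of_mul_le_mul_left ?_ hρ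
  calc bracket x * (‖a‖ * ‖V x + V' x‖) = ‖a * bracket x * (V x + V' x)‖ := by
        rw [norm_mul, norm_mul, Complex.norm_real, Real.norm_of_nonneg hρ.le]
        ring
    _ = ‖(radialDeriv V x + a * bracket x * V x) + (radialDeriv V' x + a * bracket x * V' x) -
        radialDeriv (fun y => V y + V' y) x‖ := by
        rw [radialDeriv_add (hV₂.differentiable two_ne_zero x) (hV'₂.differentiable two_ne_zero x)]
        ring_nf
    _ ≤ bracket x * ε + bracket x * ε + ‖x‖ * ‖grad (fun y => V y + V' y) x‖ :=
        (norm_sub_le _ _).trans (add_le_add ((norm_add_le _ _).trans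
          (add_le_add hV.radial hV'.radial)) (norm_radialDeriv_le _ x))
    _ ≤ bracket x * ε + bracket x * ε + bracket x * ‖grad (fun y => V y + V' y) x‖ := by
        gcongr
        exact norm_le_bracket x
    _ = _ := by ring

lemma mul_norm_sub_le (hd : ‖d‖ = 1) (hB : 0 ≤ B) :
    B * ‖V x - V' x‖ ≤ ‖grad (fun y => V y + V' y) x‖ + 2 * ε := by
  have hρ := bracket_pos x
  refine le_of_mul_le_mul_left ?_ hρ
  calc bracket x * (B * ‖V x - V' x‖) = ‖d * B * bracket x * (V x - V' x)‖ := by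
        simp only [norm_mul, Complex.norm_real, Real.norm_of_nonneg hρ.le,
          Real.norm_of_nonneg hB, hd]
        ring
    _ = ‖angularDeriv (fun y => V y + V' y) x - ((angularDeriv V x - d * B * bracket x * V x) +
        (angularDeriv V' x - -d * B * bracket x * V' x))‖ := by
        rw [angularDeriv_add (hV₂.differentiable two_ne_zero x)
          (hV'₂.differentiable two_ne_zero x)]
        ring_nf
    _ ≤ ‖x‖ * ‖grad (fun y => V y + V' y) x‖ + (bracket x * ε + bracket x * ε) :=
        (norm_sub_le _ _).trans (add_le_add (norm_angularDeriv_le _ x)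
          ((norm_add_le _ _).trans (add_le_add hV.angular hV'.angular)))
    _ ≤ bracket x * ‖grad (fun y => V y + V' y) x‖ + (bracket x * ε + bracket x * ε) := by
        gcongr
        exact norm_le_bracket x
    _ = _ := by ring

/- The radial equations control `V + V'` by the gradient and the angular ones `V - V'`, because the
two waves rotate in opposite directions; so the gradient controls both summands, even where
`V + V'` vanishes. -/
lemma norm_lap_add_le_mul_norm_grad {κ E : ℝ} (hd : ‖d‖ = 1) (hκ : 0 < κ) (hκa : κ ≤ ‖a‖)
    (hκB : κ ≤ B) (hE : 0 < E) (hVE : E / 2 ≤ ‖V x‖ ∨ E / 2 ≤ ‖V' x‖) (hε : 8 * ε ≤ κ * E) :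
    ‖lap (fun y => V y + V' y) x + lam * (V x + V' x)‖ ≤
      8 * ε / (κ * E) * ‖grad (fun y => V y + V' y) x‖ := by
  have hε₀ : 0 ≤ ε := (norm_nonneg _).trans hV.eigen
  set G := ‖grad (fun y => V y + V' y) x‖
  have h_add : κ * ‖V x + V' x‖ ≤ G + 2 * ε :=
    (mul_le_mul_of_nonneg_right hκa (norm_nonneg _)).trans (norm_mul_norm_add_le hV hV' hV₂ hV'₂)
  have h_sub : κ * ‖V x - V' x‖ ≤ G + 2 * ε :=
    (mul_le_mul_of_nonneg_right hκB (norm_nonneg _)).trans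
      (mul_norm_sub_le hV hV' hV₂ hV'₂ hd (hκ.le.trans hκB))
  have hE_le : E ≤ ‖V x + V' x‖ + ‖V x - V' x‖ := by
    rcases hVE with h | h
    · have := norm_add_le (V x + V' x) (V x - V' x)
      rw [add_add_sub_cancel, ← two_mul, norm_mul, Complex.norm_ofNat] at this
      linarith
    · have := norm_sub_le (V x + V' x) (V x - V' x)
      rw [add_sub_sub_cancel, ← two_mul, norm_mul, Complex.norm_ofNat] at this
      linarith
  have hG : κ * E ≤ 4 * G := by nlinarith
  calc _ ≤ 2 * ε := norm_lap_add_add_mul_add_le hV hV' hV₂ hV'₂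
    _ = 2 * ε / (κ * E) * (κ * E) := by field_simp
    _ ≤ 2 * ε / (κ * E) * (4 * G) := by gcongr
    _ = 8 * ε / (κ * E) * G := by ring

end Pair

end ApproximateWaves

section Cutoffs

/-- A smooth cutoff from `1` on `(-∞, 1/2]` to `0` on `[3/4, ∞)`. -/
def stepCutoff (s : ℝ) : ℂ := Real.smoothTransition (3 - 4 * s)

/-- The cutoff of the `k`-th wave, as a function of the distance of `√⟨x⟩` to the centre of the
`k`-th annulus. The zeroth annulus is a disc, whence the one-sided cutoff. -/
def annulusCutoff : ℕ → ℝ → ℂ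
  | 0, s => stepCutoff s
  | _ + 1, s => stepCutoff s * stepCutoff (-s)

variable {f : ℝ → ℂ} {k : ℕ} {K c s ρ : ℝ}

lemma contDiff_stepCutoff : ContDiff ℝ 2 stepCutoff :=
  Complex.ofRealCLM.contDiff.comp
    (Real.smoothTransition.contDiff.comp (contDiff_const.sub (contDiff_const.mul contDiff_id)))

lemma stepCutoff_of_le (hs : s ≤ 1 / 2) : stepCutoff s = 1 := by
  rw [stepCutoff, Real.smoothTransition.one_of_one_le (by linarith), Complex.ofReal_one]

lemma stepCutoff_of_ge (hs : 3 / 4 ≤ s) : stepCutoff s = 0 := by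
  rw [stepCutoff, Real.smoothTransition.zero_of_nonpos (by linarith), Complex.ofReal_zero]

lemma norm_stepCutoff_le (s : ℝ) : ‖stepCutoff s‖ ≤ 1 := by
  rw [stepCutoff, Complex.norm_real, Real.norm_of_nonneg (Real.smoothTransition.nonneg _)]
  exact Real.smoothTransition.le_one _

lemma contDiff_annulusCutoff : ∀ k, ContDiff ℝ 2 (annulusCutoff k)
  | 0 => contDiff_stepCutoff
  | _ + 1 => contDiff_stepCutoff.mul (contDiff_stepCutoff.comp contDiff_neg)

lemma annulusCutoff_of_ge (k : ℕ) (hs : 3 / 4 ≤ s) : annulusCutoff k s = 0 := by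
  cases k <;> simp [annulusCutoff, stepCutoff_of_ge hs]

lemma annulusCutoff_of_le_neg (hk : k ≠ 0) (hs : s ≤ -(3 / 4)) : annulusCutoff k s = 0 := by
  obtain ⟨k, rfl⟩ := Nat.exists_eq_succ_of_ne_zero hk
  rw [annulusCutoff, stepCutoff_of_ge (s := -s) (by linarith), mul_zero]

lemma annulusCutoff_eq_one (hs : k = 0 ∨ -(1 / 2) ≤ s) (hs' : s ≤ 1 / 2) :
    annulusCutoff k s = 1 := by
  cases k with
  | zero => exact stepCutoff_of_le hs'
  | succ k =>
    have hs : -(1 / 2) ≤ s := hs.resolve_left k.succ_ne_zero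
    rw [annulusCutoff, stepCutoff_of_le hs', stepCutoff_of_le (by linarith), mul_one]

lemma norm_annulusCutoff_le (k : ℕ) (s : ℝ) : ‖annulusCutoff k s‖ ≤ 1 := by
  cases k with
  | zero => exact norm_stepCutoff_le s
  | succ k =>
    rw [annulusCutoff, norm_mul]
    exact mul_le_one₀ (norm_stepCutoff_le s) (norm_nonneg _) (norm_stepCutoff_le (-s))

lemma hasCompactSupport_deriv_annulusCutoff (k : ℕ) :
    HasCompactSupport (deriv (annulusCutoff k)) := by
  have deriv_eq_zero {s c : ℝ} {U : Set ℝ} (hU : U ∈ 𝓝 s) (h : ∀ t ∈ U, annulusCutoff k t = c) :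
      deriv (annulusCutoff k) s = 0 := by
    have hlocal : annulusCutoff k =ᶠ[𝓝 s] fun _ => (c : ℂ) := Filter.eventually_of_mem hU h
    rw [hlocal.deriv_eq, deriv_const]
  refine HasCompactSupport.intro (K := Set.Icc (-(3 / 4)) (3 / 4)) isCompact_Icc fun s hs => ?_
  rcases not_and_or.1 hs with hs | hs
  · have hU : Set.Iio (-(3 / 4)) ∈ 𝓝 s := Iio_mem_nhds (not_le.1 hs)
    rcases eq_or_ne k 0 with rfl | hk
    · refine deriv_eq_zero (c := 1) hU fun t (ht : t < -(3 / 4)) => ?_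
      simpa using annulusCutoff_eq_one (.inl rfl) (by linarith)
    · refine deriv_eq_zero (c := 0) hU fun t (ht : t < -(3 / 4)) => ?_
      simpa using annulusCutoff_of_le_neg hk ht.le
  · refine deriv_eq_zero (c := 0) (Ioi_mem_nhds (not_le.1 hs)) fun t (ht : 3 / 4 < t) => ?_
    simpa using annulusCutoff_of_ge k ht.le

lemma exists_norm_deriv_le_of_hasCompactSupport (hf : ContDiff ℝ 2 f)
    (hsupp : HasCompactSupport (deriv f)) :
    ∃ K, ∀ s, ‖deriv f s‖ ≤ K ∧ ‖deriv (deriv f) s‖ ≤ K := by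
  have hf' : ContDiff ℝ 1 (deriv f) := hf.deriv'
  obtain ⟨K₁, hK₁⟩ := hsupp.exists_bound_of_continuous hf'.continuous
  obtain ⟨K₂, hK₂⟩ := hsupp.deriv.exists_bound_of_continuous hf'.continuous_deriv_one
  exact ⟨max K₁ K₂, fun s => ⟨le_max_of_le_left (hK₁ s), le_max_of_le_right (hK₂ s)⟩⟩

lemma exists_norm_deriv_annulusCutoff_le :
    ∃ K, ∀ k s, ‖deriv (annulusCutoff k) s‖ ≤ K ∧ ‖deriv (deriv (annulusCutoff k)) s‖ ≤ K := by
  choose K hK using fun k => exists_norm_deriv_le_of_hasCompactSupport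
    (contDiff_annulusCutoff k) (hasCompactSupport_deriv_annulusCutoff k)
  refine ⟨max (K 0) (K 1), fun k s => ?_⟩
  cases k with
  | zero => exact (hK 0 s).imp le_max_of_le_left le_max_of_le_left
  | succ k => exact (hK 1 s).imp le_max_of_le_right le_max_of_le_right

lemma contDiffOn_comp_sqrt_sub (hf : ContDiff ℝ 2 f) (c : ℝ) :
    ContDiffOn ℝ 2 (fun ρ => f (√ρ - c)) (Set.Ioi 0) :=
  hf.comp_contDiffOn ((contDiffOn_id.sqrt fun _ hρ => (ne_of_gt hρ)).sub contDiffOn_const)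

lemma hasDerivAt_comp_sqrt_sub (hf : DifferentiableAt ℝ f (√ρ - c)) (hρ : ρ ≠ 0) :
    HasDerivAt (fun r => f (√r - c)) ((1 / (2 * √ρ)) • deriv f (√ρ - c)) ρ :=
  hf.hasDerivAt.scomp ρ ((Real.hasDerivAt_sqrt hρ).sub_const c)

lemma hasDerivAt_one_div_two_mul_sqrt (hρ : 0 < ρ) :
    HasDerivAt (fun r => 1 / (2 * √r)) (-(1 / (4 * ρ * √ρ))) ρ := by
  have hsqrt : √ρ ≠ 0 := (Real.sqrt_pos.2 hρ).ne'
  have h : HasDerivAt (fun r => 1 / (2 * √r)) _ ρ := (hasDerivAt_const ρ (1 : ℝ)).fun_div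
    ((Real.hasDerivAt_sqrt hρ.ne').const_mul 2) (by positivity)
  convert h using 1
  rw [mul_pow, Real.sq_sqrt hρ.le]
  field_simp
  norm_num

lemma isSlowProfile_comp_sqrt_sub (hf : ContDiff ℝ 2 f) (hρ : 1 ≤ ρ) (hf₀ : ‖f (√ρ - c)‖ ≤ 1)
    (hf₁ : ‖deriv f (√ρ - c)‖ ≤ K) (hf₂ : ‖deriv (deriv f) (√ρ - c)‖ ≤ K) :
    IsSlowProfile K (fun r => f (√r - c)) ρ := by
  have hρ₀ : 0 < ρ := one_pos.trans_le hρ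
  have hs : 1 ≤ √ρ := Real.one_le_sqrt.2 hρ
  have hK : 0 ≤ K := (norm_nonneg _).trans hf₁
  have hf' : ContDiff ℝ 1 (deriv f) := hf.deriv'
  have hderiv {r : ℝ} (hr : 0 < r) :
      deriv (fun r => f (√r - c)) r = (1 / (2 * √r)) • deriv f (√r - c) :=
    (hasDerivAt_comp_sqrt_sub (hf.differentiable two_ne_zero _) hr.ne').deriv
  have hderiv₂ : deriv (deriv fun r => f (√r - c)) ρ =
      (1 / (2 * √ρ)) • (1 / (2 * √ρ)) • deriv (deriv f) (√ρ - c) +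
        (-(1 / (4 * ρ * √ρ))) • deriv f (√ρ - c) := by
    rw [Filter.EventuallyEq.deriv_eq
      (Filter.eventually_of_mem (Ioi_mem_nhds hρ₀) fun r hr => hderiv hr)]
    exact ((hasDerivAt_one_div_two_mul_sqrt hρ₀).fun_smul
      (hasDerivAt_comp_sqrt_sub (hf'.differentiable one_ne_zero _) hρ₀.ne')).deriv
  refine ⟨hf₀, ?_, ?_⟩
  · rw [hderiv hρ₀, norm_smul, Real.norm_of_nonneg (by positivity)]
    calc 1 / (2 * √ρ) * ‖deriv f (√ρ - c)‖ ≤ 1 / (1 * √ρ) * K := by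
          gcongr
          norm_num
      _ = K / √ρ := by ring
  · rw [hderiv₂]
    refine (norm_add_le _ _).trans ?_
    simp only [norm_smul, norm_neg, Real.norm_eq_abs, abs_of_pos,
      show 0 < 1 / (2 * √ρ) by positivity, show 0 < 1 / (4 * ρ * √ρ) by positivity]
    calc _ ≤ 1 / (2 * √ρ) * (1 / (2 * 1) * K) + 1 / (2 * 1 * √ρ) * K := by
          gcongr
          norm_num
      _ ≤ K / √ρ := by
          field_simp
          linarith

end Cutoffs

section InnerRegion

variable {a lam d : ℂ} {n : ℕ} {x : Plane}

lemma norm_wave_one_le_mul_norm_grad (hn : n ≠ 0) (hd : d ^ 2 = -1) (x : Plane) :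
    ‖wave a n (fun _ => 1) d x‖ ≤ bracket x * ‖grad (wave a n (fun _ => 1) d) x‖ := by
  have hn₁ : (1 : ℝ) ≤ n := Nat.one_le_cast.2 (Nat.one_le_iff_ne_zero.2 hn)
  calc _ ≤ n * ‖wave a n (fun _ => 1) d x‖ := le_mul_of_one_le_left (norm_nonneg _) hn₁
    _ = ‖angularDeriv (wave a n (fun _ => 1) d) x‖ := by
        rw [angularDeriv_wave hd contDiffOn_const, norm_mul, norm_mul,
          norm_eq_one_of_sq_eq_neg_one hd, one_mul, Complex.norm_natCast]
    _ ≤ ‖x‖ * ‖grad (wave a n (fun _ => 1) d) x‖ := norm_angularDeriv_le _ x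
    _ ≤ _ := mul_le_mul_of_nonneg_right (norm_le_bracket x) (norm_nonneg _)

lemma exists_norm_lap_wave_one_le (a lam : ℂ) (hn : n ≠ 0) (hd : d ^ 2 = -1) :
    ∃ C, 0 ≤ C ∧ ∀ x, ‖lap (wave a n (fun _ => 1) d) x + lam * wave a n (fun _ => 1) d x‖ ≤
      C * bracket x * ‖grad (wave a n (fun _ => 1) d) x‖ := by
  refine ⟨‖a ^ 2 + lam‖ + n ^ 2 + (0 + (‖a‖ + n) + 2) ^ 2, by positivity, fun x => ?_⟩
  have hρ := one_le_bracket x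
  have hν : n / bracket x ≤ n := div_le_self n.cast_nonneg hρ
  have hslow : IsSlowProfile 0 (fun _ => 1) (bracket x) := ⟨by simp, by simp, by simp⟩
  have herror : ‖waveError a n (fun _ => 1) (bracket x)‖ ≤ (0 + (‖a‖ + n) + 2) ^ 2 :=
    (hslow.norm_waveError_le contDiffOn_const le_rfl hρ (add_le_add_right hν _)).trans
      (div_le_self (sq_nonneg _) hρ)
  have hfreq : ‖(n / bracket x : ℂ) ^ 2‖ ≤ n ^ 2 := by
    rw [norm_pow, norm_natCast_div_ofReal n (bracket_pos x).le]
    exact pow_le_pow_left₀ (div_nonneg n.cast_nonneg (bracket_pos x).le) hν 2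
  calc _ = ‖wave a n (fun _ => 1) d x‖ *
        ‖a ^ 2 + lam - (n / bracket x) ^ 2 + waveError a n (fun _ => 1) (bracket x)‖ := by
        rw [lap_wave_add_mul_wave hd contDiffOn_const, wave, mul_one, norm_mul]
        simp only [deriv_const', mul_zero, sub_zero, zero_add, mul_one]
    _ ≤ bracket x * ‖grad (wave a n (fun _ => 1) d) x‖ *
        (‖a ^ 2 + lam‖ + n ^ 2 + (0 + (‖a‖ + n) + 2) ^ 2) := by
        have := bracket_pos x
        gcongr
        · exact norm_wave_one_le_mul_norm_grad hn hd x
        · exact (norm_add_le _ _).trans (add_le_add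
            ((norm_sub_le _ _).trans (add_le_add_right hfreq _)) herror)
    _ = _ := by ring

end InnerRegion

section Superposition

open Complex (I)

/-- The wave living where `√⟨x⟩` is close to `m₀ + k`: its angular frequency `B (m₀ + k) ^ 2`
is close to `B ⟨x⟩` there, and its sense of rotation alternates with `k`. -/
def annulusWave (a : ℂ) (B m₀ k : ℕ) : Plane → ℂ :=
  wave a (B * (m₀ + k) ^ 2) (fun ρ => annulusCutoff k (√ρ - (m₀ + k : ℕ))) ((-1) ^ k * I)

/-- The sum of the waves of all annuli, of which at most two are nonzero at each point. -/
def superposition (a : ℂ) (B m₀ : ℕ) (x : Plane) : ℂ := ∑' k, annulusWave a B m₀ k x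

variable {a lam : ℂ} {B m₀ k : ℕ} {x : Plane}

lemma sq_neg_one_pow_mul_I (k : ℕ) : ((-1) ^ k * I) ^ 2 = -1 := by
  rw [mul_pow, ← pow_mul, pow_mul', neg_one_sq, one_pow, one_mul, Complex.I_sq]

lemma contDiffOn_annulusProfile (m₀ k : ℕ) :
    ContDiffOn ℝ 2 (fun ρ => annulusCutoff k (√ρ - (m₀ + k : ℕ))) (Set.Ioi 0) :=
  contDiffOn_comp_sqrt_sub (contDiff_annulusCutoff k) _

lemma contDiff_annulusWave (a : ℂ) (B m₀ k : ℕ) : ContDiff ℝ 2 (annulusWave a B m₀ k) :=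
  contDiff_wave (contDiffOn_annulusProfile m₀ k)

lemma annulusWave_eq_zero
    (h : annulusCutoff k (√(bracket x) - (m₀ + k : ℕ)) = 0) : annulusWave a B m₀ k x = 0 := by
  rw [annulusWave, wave, h, mul_zero]

lemma norm_annulusWave_le (a : ℂ) (B m₀ k : ℕ) (x : Plane) :
    ‖annulusWave a B m₀ k x‖ ≤ envelope a x := by
  rw [annulusWave, wave, norm_mul]
  exact (mul_le_of_le_one_right (norm_nonneg _) (norm_annulusCutoff_le k _)).trans
    (norm_carrier_le (sq_neg_one_pow_mul_I k) x)

lemma superposition_eq_add (hx : k = 0 ∨ m₀ + k - 1 / 4 < √(bracket x))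
    (hx' : √(bracket x) < m₀ + k + 5 / 4) :
    superposition a B m₀ x = annulusWave a B m₀ k x + annulusWave a B m₀ (k + 1) x := by
  rw [superposition, ← Finset.sum_pair (f := (annulusWave a B m₀ · x)) k.succ_ne_self.symm]
  refine tsum_eq_sum fun j hj => annulusWave_eq_zero ?_
  simp only [Finset.mem_insert, Finset.mem_singleton, not_or] at hj
  rcases lt_or_gt_of_ne hj.1 with hlt | hgt
  · have hx := hx.resolve_left (by lia)
    have hjk : (j : ℝ) + 1 ≤ k := by exact_mod_cast hlt
    refine annulusCutoff_of_ge j ?_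
    push_cast
    linarith
  · have hjk : (k : ℝ) + 2 ≤ j := by exact_mod_cast (show k + 2 ≤ j by lia)
    refine annulusCutoff_of_le_neg (by lia) ?_
    push_cast
    linarith

lemma continuous_sqrt_bracket : Continuous fun x => √(bracket x) :=
  (contDiff_bracket (k := 0)).continuous.sqrt

lemma superposition_eventuallyEq_add (hx : k = 0 ∨ m₀ + k ≤ √(bracket x))
    (hx' : √(bracket x) < m₀ + k + 1) : superposition a B m₀ =ᶠ[𝓝 x]
      fun y => annulusWave a B m₀ k y + annulusWave a B m₀ (k + 1) y := by
  have h_upper : ∀ᶠ y in 𝓝 x, √(bracket y) < m₀ + k + 5 / 4 :=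
    continuous_sqrt_bracket.continuousAt.eventually_lt continuousAt_const (by linarith)
  have h_lower : ∀ᶠ y in 𝓝 x, k = 0 ∨ m₀ + k - 1 / 4 < √(bracket y) := by
    rcases hx with hk | hx
    · exact .of_forall fun _ => .inl hk
    · exact (continuousAt_const.eventually_lt continuous_sqrt_bracket.continuousAt
        (by linarith)).mono fun _ => .inr
  filter_upwards [h_lower, h_upper] with y hy hy' using superposition_eq_add hy hy'

lemma superposition_eventuallyEq_wave (hx : √(bracket x) ≤ m₀) :
    superposition a B m₀ =ᶠ[𝓝 x] wave a (B * m₀ ^ 2) (fun _ => 1) I := by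
  have hnear : ∀ᶠ y in 𝓝 x, √(bracket y) < m₀ + 1 / 4 :=
    continuous_sqrt_bracket.continuousAt.eventually_lt continuousAt_const (by linarith)
  filter_upwards [hnear] with y hy
  have hcutoff₀ : annulusCutoff 0 (√(bracket y) - (m₀ + 0 : ℕ)) = 1 :=
    annulusCutoff_eq_one (.inl rfl) (by push_cast; linarith)
  have hcutoff₁ : annulusCutoff (0 + 1) (√(bracket y) - (m₀ + (0 + 1) : ℕ)) = 0 :=
    annulusCutoff_of_le_neg (by lia) (by push_cast; linarith)
  rw [superposition_eq_add (k := 0) (.inl rfl) (by push_cast; linarith),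
    annulusWave_eq_zero hcutoff₁, add_zero, annulusWave, wave, hcutoff₀, wave, pow_zero, one_mul,
    add_zero]

lemma exists_annulus (m₀ : ℕ) (x : Plane) :
    ∃ k : ℕ, (k = 0 ∨ m₀ + k ≤ √(bracket x)) ∧ √(bracket x) < m₀ + k + 1 := by
  have h_lower : ⌊√(bracket x)⌋₊ ≤ √(bracket x) := Nat.floor_le (Real.sqrt_nonneg _)
  have h_upper : √(bracket x) < ⌊√(bracket x)⌋₊ + 1 := Nat.lt_floor_add_one _
  rcases le_total m₀ ⌊√(bracket x)⌋₊ with h | h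
  · refine ⟨⌊√(bracket x)⌋₊ - m₀, .inr ?_, ?_⟩ <;> rw [Nat.cast_sub h] <;> linarith
  · have : (⌊√(bracket x)⌋₊ : ℝ) ≤ m₀ := Nat.cast_le.2 h
    exact ⟨0, .inl rfl, by push_cast; linarith⟩

lemma contDiff_superposition (a : ℂ) (B m₀ : ℕ) : ContDiff ℝ 2 (superposition a B m₀) := by
  refine contDiff_iff_contDiffAt.2 fun x => ?_
  obtain ⟨k, hk, hk'⟩ := exists_annulus m₀ x
  exact ((contDiff_annulusWave a B m₀ k).add
    (contDiff_annulusWave a B m₀ (k + 1))).contDiffAt.congr_of_eventuallyEq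
      (superposition_eventuallyEq_add hk hk')

lemma norm_superposition_le (a : ℂ) (B m₀ : ℕ) (x : Plane) :
    ‖superposition a B m₀ x‖ ≤ 2 * envelope a x := by
  obtain ⟨k, hk, hk'⟩ := exists_annulus m₀ x
  rw [(superposition_eventuallyEq_add hk hk').eq_of_nhds, two_mul]
  exact (norm_add_le _ _).trans (add_le_add (norm_annulusWave_le a B m₀ k x)
    (norm_annulusWave_le a B m₀ (k + 1) x))

lemma superposition_ne_zero (a : ℂ) (B : ℕ) (hm₀ : 2 ≤ m₀) : superposition a B m₀ ≠ 0 := by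
  let x : Plane := EuclideanSpace.single 0 1
  have hx : ‖x‖ = 1 := by simp [x]
  have hm₀' : (2 : ℝ) ≤ m₀ := by exact_mod_cast hm₀
  have hbracket : bracket x ≤ 2 := Real.sqrt_le_iff.2 ⟨two_pos.le, by rw [hx]; norm_num⟩
  have hsqrt : √(bracket x) ≤ m₀ :=
    (Real.sqrt_le_self_iff.2 (.inr (one_le_bracket x))).trans (hbracket.trans hm₀')
  intro h
  have hwave : ‖wave a (B * m₀ ^ 2) (fun _ => 1) I x‖ = 0 := by
    rw [← (superposition_eventuallyEq_wave hsqrt).eq_of_nhds, h, Pi.zero_apply, norm_zero]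
  rw [wave, mul_one, norm_carrier Complex.I_sq, hx] at hwave
  have := envelope_pos a x
  have := bracket_pos x
  exact (show 0 < envelope a x * (1 / bracket x) ^ (B * m₀ ^ 2) by positivity).ne' hwave

lemma exists_norm_lap_superposition_le_inner (a lam : ℂ) (hB : B ≠ 0) (hm₀ : m₀ ≠ 0) :
    ∃ C, ∀ x, √(bracket x) ≤ m₀ →
      ‖lap (superposition a B m₀) x + lam * superposition a B m₀ x‖ ≤
        C / √(bracket x) * ‖grad (superposition a B m₀) x‖ := by
  obtain ⟨C, hC₀, hC⟩ := exists_norm_lap_wave_one_le a lam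
    (mul_ne_zero hB (pow_ne_zero 2 hm₀)) Complex.I_sq
  refine ⟨C * m₀ ^ 3, fun x hx => ?_⟩
  have hlocal := superposition_eventuallyEq_wave (a := a) (B := B) hx
  have hs : 0 < √(bracket x) := Real.sqrt_pos.2 (bracket_pos x)
  have hbracket : bracket x ≤ m₀ ^ 3 / √(bracket x) := by
    rw [le_div_iff₀ hs]
    calc bracket x * √(bracket x) = √(bracket x) ^ 3 := by
          rw [pow_succ, Real.sq_sqrt (bracket_pos x).le]
      _ ≤ m₀ ^ 3 := by gcongr
  rw [lap_congr hlocal, grad_congr hlocal, hlocal.eq_of_nhds, mul_div_assoc]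
  exact (hC x).trans (by gcongr)

lemma abs_sq_sub_sq_le {j s : ℝ} (hs : 1 ≤ s) (hj : |j - s| ≤ 1) : |j ^ 2 - s ^ 2| ≤ 3 * s := by
  have hsum : |j + s| ≤ 3 * s := abs_le.2 ⟨by linarith [abs_le.1 hj], by linarith [abs_le.1 hj]⟩
  rw [sq_sub_sq, abs_mul]
  exact (mul_le_of_le_one_right (abs_nonneg _) hj).trans hsum

lemma exists_isApproxWave_annulusWave (ha : a ^ 2 + lam = B ^ 2) :
    ∃ C > 0, ∀ (m₀ k : ℕ) (x : Plane), |(m₀ + k : ℕ) - √(bracket x)| ≤ 1 →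
      IsApproxWave (C * envelope a x / √(bracket x)) a B lam ((-1) ^ k * I)
        (annulusWave a B m₀ k) x := by
  obtain ⟨K, hK⟩ := exists_norm_deriv_annulusCutoff_le
  have hK₀ : 0 ≤ K := (norm_nonneg _).trans (hK 0 0).1
  obtain ⟨C, hC₀, hC⟩ := exists_isApproxWave_wave hK₀ B.cast_nonneg
    (by rwa [Complex.ofReal_natCast] : a ^ 2 + lam = ((B : ℝ) : ℂ) ^ 2)
  refine ⟨C, hC₀, fun m₀ k x hx => hC _ _ _ x (sq_neg_one_pow_mul_I k)
    (contDiffOn_annulusProfile m₀ k)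
    (isSlowProfile_comp_sqrt_sub (contDiff_annulusCutoff k) (one_le_bracket x)
      (norm_annulusCutoff_le k _) (hK k _).1 (hK k _).2) ?_⟩
  have hfreq := abs_sq_sub_sq_le (Real.one_le_sqrt.2 (one_le_bracket x)) hx
  rw [Real.sq_sqrt (bracket_pos x).le] at hfreq
  calc _ = B * |((m₀ + k : ℕ) : ℝ) ^ 2 - bracket x| := by
        rw [← Nat.abs_cast B, ← abs_mul, Nat.abs_cast]
        push_cast
        ring_nf
    _ ≤ B * (3 * √(bracket x)) := by gcongr
    _ = _ := by ring

lemma half_envelope_le_norm_annulusWave (hm₀ : 8 * B ≤ m₀) (hx : m₀ ≤ √(bracket x))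
    (hk : |(m₀ + k : ℕ) - √(bracket x)| ≤ 1)
    (hcutoff : annulusCutoff k (√(bracket x) - (m₀ + k : ℕ)) = 1) :
    envelope a x / 2 ≤ ‖annulusWave a B m₀ k x‖ := by
  rw [annulusWave, wave, hcutoff, mul_one]
  refine half_envelope_le_norm_carrier (sq_neg_one_pow_mul_I k) ?_
  have hs : 1 ≤ √(bracket x) := Real.one_le_sqrt.2 (one_le_bracket x)
  have hB : (8 * B : ℝ) ≤ √(bracket x) := le_trans (by exact_mod_cast hm₀) hx
  have hj : ((m₀ + k : ℕ) : ℝ) ≤ 2 * √(bracket x) := by linarith [abs_le.1 hk]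
  have hsq : √(bracket x) ^ 2 = bracket x := Real.sq_sqrt (bracket_pos x).le
  rw [Nat.cast_mul, Nat.cast_pow]
  calc (2 * (B * ((m₀ + k : ℕ) : ℝ) ^ 2) : ℝ) ≤ 2 * (B * (2 * √(bracket x)) ^ 2) := by gcongr
    _ = 8 * B * bracket x := by
        rw [mul_pow, hsq]
        ring
    _ ≤ bracket x * bracket x := by
        have := bracket_pos x
        gcongr
        exact hB.trans (Real.sqrt_le_self_iff.2 (.inr (one_le_bracket x)))
    _ = bracket x ^ 2 := (sq _).symm

lemma exists_half_envelope_le_norm_annulusWave (a : ℂ) (hm₀ : 8 * B ≤ m₀)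
    (hx : m₀ ≤ √(bracket x)) (hk : m₀ + k ≤ √(bracket x)) (hk' : √(bracket x) < m₀ + k + 1) :
    envelope a x / 2 ≤ ‖annulusWave a B m₀ k x‖ ∨
      envelope a x / 2 ≤ ‖annulusWave a B m₀ (k + 1) x‖ := by
  rcases le_total (√(bracket x)) (m₀ + k + 1 / 2) with h | h
  · exact .inl <| half_envelope_le_norm_annulusWave hm₀ hx
      (abs_le.2 ⟨by push_cast; linarith, by push_cast; linarith⟩)
      (annulusCutoff_eq_one (.inr (by push_cast; linarith)) (by push_cast; linarith))
  · exact .inr <| half_envelope_le_norm_annulusWave hm₀ hx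
      (abs_le.2 ⟨by push_cast; linarith, by push_cast; linarith⟩)
      (annulusCutoff_eq_one (.inr (by push_cast; linarith)) (by push_cast; linarith))

end Superposition

section Estimate

open Complex (I)

variable {a lam : ℂ} {B : ℕ}

lemma exists_norm_lap_superposition_le_outer (ha₀ : a ≠ 0) (hB : B ≠ 0)
    (ha : a ^ 2 + lam = B ^ 2) :
    ∃ N : ℕ, ∃ C, ∀ m₀ ≥ N, ∀ x, m₀ ≤ √(bracket x) →
      ‖lap (superposition a B m₀) x + lam * superposition a B m₀ x‖ ≤
        C / √(bracket x) * ‖grad (superposition a B m₀) x‖ := by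
  obtain ⟨C, hC₀, hC⟩ := exists_isApproxWave_annulusWave ha
  obtain ⟨κ, hκ, hκa, hκB⟩ : ∃ κ > 0, κ ≤ ‖a‖ ∧ κ ≤ (B : ℝ) :=
    ⟨min ‖a‖ B, lt_min (norm_pos_iff.2 ha₀) (Nat.cast_pos.2 (Nat.pos_of_ne_zero hB)),
      min_le_left _ _, min_le_right _ _⟩
  obtain ⟨M, hM⟩ := exists_nat_ge (8 * C / κ)
  refine ⟨max (8 * B) M, 8 * C / κ, fun m₀ hm₀ x hx => ?_⟩
  obtain ⟨k, hk, hk'⟩ := exists_annulus m₀ x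
  have hk : m₀ + k ≤ √(bracket x) := hk.elim (fun h => by simpa [h] using hx) id
  have hlocal := superposition_eventuallyEq_add (a := a) (B := B) (.inr hk) hk'
  have hs : 0 < √(bracket x) := Real.sqrt_pos.2 (bracket_pos x)
  have hE := envelope_pos a x
  have hV := hC m₀ k x (abs_le.2 ⟨by push_cast; linarith, by push_cast; linarith⟩)
  have hV' := hC m₀ (k + 1) x (abs_le.2 ⟨by push_cast; linarith, by push_cast; linarith⟩)
  rw [pow_succ, mul_neg_one, neg_mul] at hV'
  have hsmall : 8 * (C * envelope a x / √(bracket x)) ≤ κ * envelope a x := by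
    have hCs : 8 * C ≤ √(bracket x) * κ := (div_le_iff₀ hκ).1 <|
      hM.trans ((Nat.cast_le.2 (le_of_max_le_right hm₀)).trans hx)
    calc _ = 8 * C * (envelope a x / √(bracket x)) := by ring
      _ ≤ √(bracket x) * κ * (envelope a x / √(bracket x)) := by gcongr
      _ = κ * envelope a x := by field_simp
  rw [lap_congr hlocal, grad_congr hlocal, hlocal.eq_of_nhds]
  refine (norm_lap_add_le_mul_norm_grad hV hV' (contDiff_annulusWave a B m₀ k)
    (contDiff_annulusWave a B m₀ (k + 1)) (norm_eq_one_of_sq_eq_neg_one (sq_neg_one_pow_mul_I k))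
    hκ hκa hκB hE (exists_half_envelope_le_norm_annulusWave a (le_of_max_le_left hm₀) hx hk hk')
    hsmall).trans_eq ?_
  congr 1
  field_simp

lemma exists_norm_lap_superposition_le (ha₀ : a ≠ 0) (hB : B ≠ 0) (ha : a ^ 2 + lam = B ^ 2) :
    ∃ m₀ ≥ 2, ∃ C > 0, ∀ x,
      ‖lap (superposition a B m₀) x + lam * superposition a B m₀ x‖ ≤
        C / √(bracket x) * ‖grad (superposition a B m₀) x‖ := by
  obtain ⟨N, C₁, hC₁⟩ := exists_norm_lap_superposition_le_outer ha₀ hB ha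
  obtain ⟨C₂, hC₂⟩ :=
    exists_norm_lap_superposition_le_inner a lam (m₀ := max N 2) hB (by lia)
  refine ⟨max N 2, le_max_right _ _, max 1 (max C₁ C₂), by positivity, fun x => ?_⟩
  rcases le_total (√(bracket x)) (max N 2 : ℕ) with hx | hx
  · exact (hC₂ x hx).trans (by gcongr; simp)
  · exact (hC₁ _ (le_max_left _ _) x hx).trans (by gcongr; simp)

lemma exists_sq_eq_of_re_pos {z : ℂ} (hz : 0 < z.re) : ∃ w : ℂ, w ^ 2 = z ∧ 0 < w.re := by
  obtain ⟨w, rfl⟩ := IsAlgClosed.exists_pow_nat_eq z two_pos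
  have hw : w.re ≠ 0 := fun h => by
    rw [sq, Complex.mul_re, h, zero_mul, zero_sub] at hz
    exact absurd (mul_self_nonneg w.im) (by linarith)
  rcases lt_or_gt_of_ne hw with hneg | hpos
  · exact ⟨-w, neg_sq w, by simpa using hneg⟩
  · exact ⟨w, rfl, hpos⟩

lemma exists_sq_add_eq_natCast_sq (lam : ℂ) :
    ∃ (B : ℕ) (a : ℂ), B ≠ 0 ∧ a ^ 2 + lam = B ^ 2 ∧ 0 < a.re := by
  obtain ⟨B, hB⟩ := exists_nat_gt ‖lam‖
  have hB₀ : B ≠ 0 := fun h => by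
    rw [h, Nat.cast_zero] at hB
    exact hB.not_ge (norm_nonneg lam)
  have hB₁ : (1 : ℝ) ≤ B := Nat.one_le_cast.2 (Nat.one_le_iff_ne_zero.2 hB₀)
  have hre : 0 < ((B : ℂ) ^ 2 - lam).re := by
    rw [Complex.sub_re, ← Nat.cast_pow, Complex.natCast_re, Nat.cast_pow, sub_pos]
    calc lam.re ≤ ‖lam‖ := Complex.re_le_norm lam
      _ < B := hB
      _ ≤ B ^ 2 := le_self_pow₀ hB₁ two_ne_zero
  obtain ⟨a, ha, ha_re⟩ := exists_sq_eq_of_re_pos hre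
  exact ⟨B, a, hB₀, by rw [ha, sub_add_cancel], ha_re⟩

end Estimate

theorem stmt1 (lam : ℂ) :
    ∃ (C c : ℝ) (W : EuclideanSpace ℝ (Fin 2) → EuclideanSpace ℂ (Fin 2))
      (u : EuclideanSpace ℝ (Fin 2) → ℂ),
      0 < C ∧ 0 < c ∧ u ≠ 0 ∧ ContDiff ℝ 2 u ∧
      (∀ x, lap u x + lam * u x = ∑ i, W x i * pd u i x) ∧
      (∀ x, ‖W x‖ ≤ C * Real.sqrt (1 + ‖x‖ ^ 2) ^ (-(1 / 2 : ℝ))) ∧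
      (∀ x, ‖u x‖ ≤ C * Real.exp (-(c * ‖x‖))) := by
  obtain ⟨B, a, hB, ha, ha_re⟩ := exists_sq_add_eq_natCast_sq lam
  have ha₀ : a ≠ 0 := fun h => by simp [h] at ha_re
  obtain ⟨m₀, hm₀, C, hC₀, hC⟩ := exists_norm_lap_superposition_le ha₀ hB ha
  choose W hW hW_le using fun x => exists_sum_mul_eq_of_norm_le (grad (superposition a B m₀) x)
    (div_nonneg hC₀.le (Real.sqrt_nonneg _)) (hC x)
  refine ⟨max C 2, a.re, W, superposition a B m₀, by positivity, ha_re,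
    superposition_ne_zero a B hm₀, contDiff_superposition a B m₀, fun x => (hW x).symm,
    fun x => ?_, fun x => ?_⟩
  · calc ‖W x‖ ≤ C / √(bracket x) := hW_le x
      _ = C * bracket x ^ (-(1 / 2 : ℝ)) := by
          rw [Real.rpow_neg (bracket_pos x).le, ← Real.sqrt_eq_rpow, div_eq_mul_inv]
      _ ≤ max C 2 * bracket x ^ (-(1 / 2 : ℝ)) := by
          have := bracket_pos x
          gcongr
          exact le_max_left _ _
  · calc ‖superposition a B m₀ x‖ ≤ 2 * envelope a x := norm_superposition_le a B m₀ x
      _ ≤ max C 2 * Real.exp (-(a.re * ‖x‖)) := by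
          rw [envelope]
          gcongr
          · exact le_max_right _ _
          · exact norm_le_bracket x
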